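/- arXiv:1906.02162 — 2 statements merged into one kernel-verified Lean document; each statement's English description precedes it below -/
import Mathlib

section
/- Let 1 < p < ∞, 1 ≤ q < ∞, and Γ₁, Γ₂ arbitrary index sets. Then the pair (ℓ_p(Γ₁), ℓ_q(Γ₂)) has the weak maximizing property: any bounded linear operator T : ℓ_p(Γ₁) → ℓ_q(Γ₂) admitting a non-weakly null maximizing sequence attains its norm. -/
open Filter Topology
open scoped ENNReal

/-!
Pass to an ultrafilter along which the maximizing sequence does not become weakly null, let `y` be
the coordinatewise limit of `x n` there, and put `g n = x n - y`. Since `g` tends to `0` in every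
coordinate, `‖z + g n‖ ^ p` tends to `‖z‖ ^ p + β` for all `z`, where `β` is the limit of
`‖g n‖ ^ p`. For `1 < p` this forces `g` to be weakly null, so that `y ≠ 0`, and `T (g n)` tends
to `0` in every coordinate, so that `‖w + T (g n)‖ ^ q` tends to `‖w‖ ^ q + γ` for all `w`.

If now `‖z‖ ≤ ‖y‖`, then `lim ‖z + g n‖ ≤ lim ‖y + g n‖ = lim ‖x n‖ = 1`, hence
`lim ‖T z + T (g n)‖ ≤ ‖T‖ = lim ‖T (x n)‖ = lim ‖T y + T (g n)‖`, that is, `‖T z‖ ≤ ‖T y‖`. The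
supremum over all such `z` is `‖T‖ * ‖y‖`, so `T` attains its norm at `y / ‖y‖`.
-/

section Limits

theorem exists_tendsto_ultrafilter_of_norm_le {ι V : Type*} [SeminormedAddCommGroup V]
    [ProperSpace V] (U : Ultrafilter ι) {u : ι → V} {M : ℝ} (hu : ∀ n, ‖u n‖ ≤ M) :
    ∃ a, Tendsto u U (𝓝 a) := by
  have hball : ∀ᶠ n in U, u n ∈ Metric.closedBall (0 : V) M :=
    Eventually.of_forall fun n ↦ by simpa using hu n
  obtain ⟨a, -, ha⟩ := (isCompact_closedBall (0 : V) M).ultrafilter_le_nhds (U.map u)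
    (le_principal_iff.2 hball)
  exact ⟨a, ha⟩

theorem tendsto_rpow_add_rpow_inv_sub_self_atTop {r β : ℝ} (hr : 1 < r) (hβ : 0 ≤ β) :
    Tendsto (fun s : ℝ ↦ (s ^ r + β) ^ r⁻¹ - s) atTop (𝓝 0) := by
  have hr0 : 0 < r := zero_lt_one.trans hr
  have hbound : Tendsto (fun s : ℝ ↦ β * s ^ (-(r - 1))) atTop (𝓝 0) := by
    simpa using (tendsto_rpow_neg_atTop (sub_pos.2 hr)).const_mul β
  refine tendsto_of_tendsto_of_tendsto_of_le_of_le' tendsto_const_nhds hbound ?_ ?_ <;>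
    filter_upwards [eventually_gt_atTop 0] with s hs
  · rw [sub_nonneg, Real.le_rpow_inv_iff_of_pos hs.le (by positivity) hr0]
    exact le_add_of_nonneg_right hβ
  · have hone : (1 + β * s ^ (-r)) ^ r⁻¹ ≤ 1 + β * s ^ (-r) :=
      Real.rpow_le_self_of_one_le (le_add_of_nonneg_right (by positivity))
        (inv_le_one_of_one_le₀ hr.le)
    rw [sub_le_iff_le_add']
    calc (s ^ r + β) ^ r⁻¹ = (s ^ r * (1 + β * s ^ (-r))) ^ r⁻¹ := by
          rw [Real.rpow_neg hs.le]
          field_simp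
      _ = s * (1 + β * s ^ (-r)) ^ r⁻¹ := by
          rw [Real.mul_rpow (by positivity) (by positivity), Real.rpow_rpow_inv hs.le hr0.ne']
      _ ≤ s * (1 + β * s ^ (-r)) := by gcongr
      _ = s + β * s ^ (-(r - 1)) := by
          rw [show -(r - 1) = 1 + -r by ring, Real.rpow_add hs, Real.rpow_one]
          ring

end Limits

section OperatorNorm

variable {𝕜 V W : Type*} [RCLike 𝕜]

theorem exists_norm_eq_one_norm_mul_add_eq (a b : 𝕜) :
    ∃ c : 𝕜, ‖c‖ = 1 ∧ ‖c * a + b‖ = ‖a‖ + ‖b‖ := by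
  obtain ⟨c, hc, hca⟩ := RCLike.exists_norm_eq_mul_self a
  obtain ⟨d, hd, hdb⟩ := RCLike.exists_norm_eq_mul_self b
  have hd0 : d ≠ 0 := norm_ne_zero_iff.1 (hd ▸ one_ne_zero)
  refine ⟨d⁻¹ * c, by simp [hc, hd], ?_⟩
  calc ‖d⁻¹ * c * a + b‖ = ‖d * (d⁻¹ * c * a + b)‖ := by rw [norm_mul, hd, one_mul]
    _ = ‖c * a + d * b‖ := by rw [mul_add, mul_assoc, mul_inv_cancel_left₀ hd0]
    _ = ‖((‖a‖ + ‖b‖ : ℝ) : 𝕜)‖ := by rw [← hca, ← hdb, RCLike.ofReal_add]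
    _ = ‖a‖ + ‖b‖ := by rw [RCLike.norm_ofReal, abs_of_nonneg (by positivity)]

theorem opNorm_mul_le_of_forall_norm_le [SeminormedAddCommGroup V] [NormedSpace 𝕜 V]
    [SeminormedAddCommGroup W] [NormedSpace 𝕜 W] (T : V →L[𝕜] W) {s C : ℝ} (hs : 0 ≤ s)
    (h : ∀ z, ‖z‖ ≤ s → ‖T z‖ ≤ C) : ‖T‖ * s ≤ C := by
  have hnorm : ‖(s : 𝕜)‖ = s := by rw [RCLike.norm_ofReal, abs_of_nonneg hs]
  calc ‖T‖ * s = ‖(s : 𝕜) • T‖ := by rw [norm_smul, hnorm, mul_comm]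
    _ ≤ C := by
      refine ContinuousLinearMap.opNorm_le_of_unit_norm
        ((norm_nonneg _).trans (h 0 (by simpa))) fun z hz ↦ ?_
      rw [smul_apply, ← map_smul]
      exact h _ (by rw [norm_smul, hnorm, hz, mul_one])

theorem exists_norm_eq_one_norm_map_eq_opNorm [NormedAddCommGroup V] [NormedSpace 𝕜 V]
    [SeminormedAddCommGroup W] [NormedSpace 𝕜 W] {T : V →L[𝕜] W} {y : V} (hy : y ≠ 0)
    (h : ‖T‖ * ‖y‖ ≤ ‖T y‖) : ∃ x₀, ‖x₀‖ = 1 ∧ ‖T x₀‖ = ‖T‖ := by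
  refine ⟨(‖y‖⁻¹ : 𝕜) • y, norm_smul_inv_norm hy, ?_⟩
  rw [map_smul, norm_smul, (T.le_opNorm y).antisymm h, norm_inv, RCLike.norm_ofReal, abs_norm,
    mul_comm, mul_inv_cancel_right₀ (norm_ne_zero_iff.2 hy)]

end OperatorNorm

/-- A strong form of Kalton's property (M) for a single net `g` along the filter `l`: every
translate of `g` has norm asymptotically equal to that of an `ℓ_r`-sum. The number `β` is the limit
of `‖g i‖ ^ r` itself, not of `‖g i‖`. -/
def NormRpowSplits {ι V : Type*} [SeminormedAddCommGroup V] (r β : ℝ) (l : Filter ι)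
    (g : ι → V) : Prop :=
  ∀ z, Tendsto (fun i ↦ ‖z + g i‖ ^ r) l (𝓝 (‖z‖ ^ r + β))

namespace NormRpowSplits

variable {𝕜 ι V W : Type*} [RCLike 𝕜] [SeminormedAddCommGroup V] {l : Filter ι} {g : ι → V}
  {p q r β γ : ℝ}

theorem nonneg [l.NeBot] (hr : r ≠ 0) (hg : NormRpowSplits r β l g) : 0 ≤ β := by
  have hβ : Tendsto (fun i ↦ ‖0 + g i‖ ^ r) l (𝓝 β) := by
    simpa [Real.zero_rpow hr] using hg 0
  exact ge_of_tendsto' hβ fun i ↦ by positivity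

variable [NormedSpace 𝕜 V]

theorem norm_add_norm_le_of_tendsto [l.NeBot] (hr : 0 < r) (hg : NormRpowSplits r β l g)
    {f : V →L[𝕜] 𝕜} {w : 𝕜} (hw : Tendsto (fun i ↦ f (g i)) l (𝓝 w)) (z : V) :
    ‖f z‖ + ‖w‖ ≤ ‖f‖ * (‖z‖ ^ r + β) ^ r⁻¹ := by
  obtain ⟨c, hc, hcw⟩ := exists_norm_eq_one_norm_mul_add_eq (f z) w
  have hleft : Tendsto (fun i ↦ ‖f (c • z + g i)‖) l (𝓝 (‖f z‖ + ‖w‖)) := by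
    simpa only [map_add, map_smul, smul_eq_mul, hcw] using (hw.const_add (c * f z)).norm
  have hright : Tendsto (fun i ↦ ‖f‖ * ‖c • z + g i‖) l (𝓝 (‖f‖ * (‖z‖ ^ r + β) ^ r⁻¹)) := by
    have hroot := (hg (c • z)).rpow_const (p := r⁻¹) (Or.inr (by positivity))
    simp only [Real.rpow_rpow_inv (norm_nonneg _) hr.ne', norm_smul, hc, one_mul] at hroot
    exact hroot.const_mul ‖f‖
  exact le_of_tendsto_of_tendsto' hleft hright fun i ↦ f.le_opNorm _

theorem eq_zero_of_tendsto_dual [l.NeBot] (hr : 1 < r) (hg : NormRpowSplits r β l g)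
    {f : V →L[𝕜] 𝕜} {w : 𝕜} (hw : Tendsto (fun i ↦ f (g i)) l (𝓝 w)) : w = 0 := by
  have hr0 : 0 < r := zero_lt_one.trans hr
  have hβ : 0 ≤ β := hg.nonneg hr0.ne'
  have hbound : ∀ s : ℝ, 0 ≤ s → ‖w‖ ≤ ‖f‖ * ((s ^ r + β) ^ r⁻¹ - s) := fun s hs ↦ by
    have hsup : ‖f‖ * s ≤ ‖f‖ * (s ^ r + β) ^ r⁻¹ - ‖w‖ := by
      refine opNorm_mul_le_of_forall_norm_le f hs fun z hz ↦ ?_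
      rw [le_sub_iff_add_le]
      exact (hg.norm_add_norm_le_of_tendsto hr0 hw z).trans (by gcongr)
    linarith
  have hlim : Tendsto (fun s : ℝ ↦ ‖f‖ * ((s ^ r + β) ^ r⁻¹ - s)) atTop (𝓝 0) := by
    simpa using (tendsto_rpow_add_rpow_inv_sub_self_atTop hr hβ).const_mul ‖f‖
  exact norm_le_zero_iff.1 (ge_of_tendsto hlim ((eventually_ge_atTop 0).mono hbound))

theorem tendsto_map_zero [NormedAddCommGroup W] [NormedSpace 𝕜 W] [ProperSpace W]
    {U : Ultrafilter ι} (hr : 1 < r) (hg : NormRpowSplits r β U g) {M : ℝ}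
    (hM : ∀ i, ‖g i‖ ≤ M) (f : V →L[𝕜] W) : Tendsto (fun i ↦ f (g i)) U (𝓝 0) := by
  obtain ⟨w, hw⟩ := exists_tendsto_ultrafilter_of_norm_le U fun i ↦ f.le_opNorm_of_le (hM i)
  have hw0 : w = 0 := SeparatingDual.eq_zero_of_forall_dual_eq_zero (R := 𝕜) fun φ ↦
    hg.eq_zero_of_tendsto_dual hr (f := φ.comp f) ((φ.continuous.tendsto w).comp hw)
  rwa [hw0] at hw

variable [SeminormedAddCommGroup W] [NormedSpace 𝕜 W] {T : V →L[𝕜] W}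

theorem rpow_norm_map_add_le [l.NeBot] (hp : 0 < p) (hq : 0 ≤ q) (hg : NormRpowSplits p β l g)
    (hTg : NormRpowSplits q γ l fun i ↦ T (g i)) (z : V) :
    ‖T z‖ ^ q + γ ≤ ‖T‖ ^ q * (‖z‖ ^ p + β) ^ (q / p) := by
  have hright := ((hg z).rpow_const (p := q / p) (Or.inr (by positivity))).const_mul (‖T‖ ^ q)
  refine le_of_tendsto_of_tendsto' (hTg (T z)) hright fun i ↦ ?_
  calc ‖T z + T (g i)‖ ^ q = ‖T (z + g i)‖ ^ q := by rw [map_add]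
    _ ≤ (‖T‖ * ‖z + g i‖) ^ q := by gcongr; exact T.le_opNorm _
    _ = ‖T‖ ^ q * (‖z + g i‖ ^ p) ^ (q / p) := by
        rw [Real.mul_rpow (norm_nonneg _) (norm_nonneg _), ← Real.rpow_mul (norm_nonneg _),
          mul_div_cancel₀ _ hp.ne']

theorem opNorm_mul_norm_le_norm_map [l.NeBot] (hp : 0 < p) (hq : 0 < q) {x : ι → V} {y : V}
    (hg : NormRpowSplits p β l fun i ↦ x i - y)
    (hTg : NormRpowSplits q γ l fun i ↦ T (x i - y)) (hx : ∀ i, ‖x i‖ ≤ 1)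
    (hmax : Tendsto (fun i ↦ ‖T (x i)‖) l (𝓝 ‖T‖)) : ‖T‖ * ‖y‖ ≤ ‖T y‖ := by
  have hβ : 0 ≤ β := hg.nonneg hp.ne'
  have hsource : ‖y‖ ^ p + β ≤ 1 := le_of_tendsto' (hg y) fun i ↦ by
    rw [add_sub_cancel]
    exact Real.rpow_le_one (norm_nonneg _) (hx i) hp.le
  have htarget : ‖T y‖ ^ q + γ = ‖T‖ ^ q := by
    refine tendsto_nhds_unique (hTg (T y)) ?_
    simpa only [← map_add, add_sub_cancel] using hmax.rpow_const (Or.inr hq.le)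
  refine opNorm_mul_le_of_forall_norm_le T (norm_nonneg y) fun z hz ↦ ?_
  have hzβ : ‖z‖ ^ p + β ≤ 1 := hsource.trans' (by gcongr)
  have hTz : ‖T z‖ ^ q + γ ≤ ‖T y‖ ^ q + γ :=
    calc ‖T z‖ ^ q + γ ≤ ‖T‖ ^ q * (‖z‖ ^ p + β) ^ (q / p) :=
          rpow_norm_map_add_le hp hq.le hg hTg z
      _ ≤ ‖T‖ ^ q := mul_le_of_le_one_right (by positivity)
          (Real.rpow_le_one (by positivity) hzβ (by positivity))
      _ = ‖T y‖ ^ q + γ := htarget.symm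
  exact (Real.rpow_le_rpow_iff (norm_nonneg _) (norm_nonneg _) hq).1 (le_of_add_le_add_right hTz)

end NormRpowSplits

theorem isClosed_setOf_tendsto_norm_add_rpow {ι V : Type*} [SeminormedAddCommGroup V] {r β : ℝ}
    (hr : 0 < r) (hβ : 0 ≤ β) (l : Filter ι) (g : ι → V) :
    IsClosed {z | Tendsto (fun n ↦ ‖z + g n‖ ^ r) l (𝓝 (‖z‖ ^ r + β))} := by
  have hroot (z : V) : Tendsto (fun n ↦ ‖z + g n‖ ^ r) l (𝓝 (‖z‖ ^ r + β)) ↔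
      Tendsto (fun n ↦ ‖z + g n‖) l (𝓝 ((‖z‖ ^ r + β) ^ r⁻¹)) := by
    constructor <;> intro h
    · simpa only [Real.rpow_rpow_inv (norm_nonneg _) hr.ne'] using
        h.rpow_const (p := r⁻¹) (Or.inr (by positivity))
    · have hpow := h.rpow_const (p := r) (Or.inr hr.le)
      rwa [Real.rpow_inv_rpow (by positivity) hr.ne'] at hpow
  have hequi : Equicontinuous fun n (z : V) ↦ ‖z + g n‖ :=
    (LipschitzWith.uniformEquicontinuous _ 1 fun n ↦ by
      simpa [Function.comp_def] using
        lipschitzWith_one_norm.comp (isometry_add_right (g n)).lipschitz).equicontinuous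
  have hcont : Continuous fun z : V ↦ (‖z‖ ^ r + β) ^ r⁻¹ :=
    ((continuous_norm.rpow_const fun _ ↦ Or.inr hr.le).add_const β).rpow_const
      fun _ ↦ Or.inr (by positivity)
  simpa only [hroot] using hequi.isClosed_setOfPred_tendsto hcont

section Lp

variable {ι Γ : Type*} {E : Γ → Type*} [∀ i, NormedAddCommGroup (E i)] {p : ℝ≥0∞}

theorem norm_add_single_rpow [DecidableEq Γ] (hp : 0 < p.toReal) (f : lp E p) (i : Γ) (a : E i) :
    ‖f + lp.single p i a‖ ^ p.toReal =
      ‖f‖ ^ p.toReal - ‖f i‖ ^ p.toReal + ‖f i + a‖ ^ p.toReal := by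
  have hf := lp.norm_sub_norm_compl_sub_single hp f {i}
  have hadd := lp.norm_sub_norm_compl_sub_single hp (f + lp.single p i a) {i}
  simp only [Finset.sum_singleton, lp.coeFn_add, Pi.add_apply, lp.single_apply_self,
    lp.single_add, add_sub_add_right_eq_sub] at hf hadd
  linarith

theorem tendsto_norm_add_single_add_rpow [DecidableEq Γ] {l : Filter ι} (hp : 0 < p.toReal)
    {g : ι → lp E p} {β : ℝ} {z : lp E p} {i : Γ} (hg : Tendsto (fun n ↦ g n i) l (𝓝 0))
    (hz : Tendsto (fun n ↦ ‖z + g n‖ ^ p.toReal) l (𝓝 (‖z‖ ^ p.toReal + β))) (a : E i) :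
    Tendsto (fun n ↦ ‖z + lp.single p i a + g n‖ ^ p.toReal) l
      (𝓝 (‖z + lp.single p i a‖ ^ p.toReal + β)) := by
  have hcoord (b : E i) :
      Tendsto (fun n ↦ ‖b + g n i‖ ^ p.toReal) l (𝓝 (‖b‖ ^ p.toReal)) := by
    simpa using (hg.const_add b).norm.rpow_const (Or.inr hp.le)
  have hlim := (hz.sub (hcoord (z i))).add (hcoord (z i + a))
  convert hlim using 2 with n
  · rw [add_right_comm z, norm_add_single_rpow hp, lp.coeFn_add, Pi.add_apply,
      add_right_comm (z i)]
  · rw [norm_add_single_rpow hp]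
    ring

variable [Fact (1 ≤ p)]

theorem normRpowSplits_of_tendsto_apply_zero {l : Filter ι} [l.NeBot] (hp : p ≠ ∞)
    {g : ι → lp E p} {β : ℝ} (hβ : Tendsto (fun n ↦ ‖g n‖ ^ p.toReal) l (𝓝 β))
    (hg : ∀ i, Tendsto (fun n ↦ g n i) l (𝓝 0)) : NormRpowSplits p.toReal β l g := by
  classical
  have hp0 : 0 < p.toReal := ENNReal.toReal_pos (zero_lt_one.trans_le Fact.out).ne' hp
  intro f
  have hβ0 : 0 ≤ β := ge_of_tendsto' hβ fun n ↦ by positivity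
  refine (isClosed_setOf_tendsto_norm_add_rpow hp0 hβ0 l g).mem_of_tendsto
    (lp.hasSum_single hp f) (Eventually.of_forall fun s ↦ ?_)
  induction s using Finset.induction_on with
  | empty => simpa [Real.zero_rpow hp0.ne'] using hβ
  | insert i s hi ih =>
    rw [Finset.sum_insert hi, add_comm]
    exact tendsto_norm_add_single_add_rpow hp0 (hg i) ih (f i)

theorem exists_normRpowSplits_of_tendsto_apply_zero {U : Ultrafilter ι} (hp : p ≠ ∞)
    {g : ι → lp E p} {M : ℝ} (hM : ∀ n, ‖g n‖ ≤ M)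
    (hg : ∀ i, Tendsto (fun n ↦ g n i) U (𝓝 0)) : ∃ β, NormRpowSplits p.toReal β U g := by
  obtain ⟨b, hb⟩ := exists_tendsto_ultrafilter_of_norm_le U (u := fun n ↦ ‖g n‖) (M := M)
    (by simpa using hM)
  exact ⟨_, normRpowSplits_of_tendsto_apply_zero hp
    (hb.rpow_const (Or.inr ENNReal.toReal_nonneg)) hg⟩

theorem exists_tendsto_apply_of_norm_le [∀ i, ProperSpace (E i)] (U : Ultrafilter ι)
    {x : ι → lp E p} {M : ℝ} (hx : ∀ n, ‖x n‖ ≤ M) :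
    ∃ y : lp E p, ∀ i, Tendsto (fun n ↦ x n i) U (𝓝 (y i)) := by
  have hp0 : p ≠ 0 := (zero_lt_one.trans_le Fact.out).ne'
  choose a ha using fun i ↦ exists_tendsto_ultrafilter_of_norm_le U fun n ↦
    (lp.norm_apply_le_norm hp0 (x n) i).trans (hx n)
  have hbdd : Bornology.IsBounded (Set.range x) :=
    isBounded_iff_forall_norm_le.2 ⟨M, Set.forall_mem_range.2 hx⟩
  exact ⟨⟨a, lp.memℓp_of_tendsto hbdd (tendsto_pi_nhds.2 ha)⟩, ha⟩

end Lp

theorem weak_maximizing_lp_lq_general_index_general {𝕜 ι Γ₁ Γ₂ : Type*} [RCLike 𝕜]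
    {E : Γ₁ → Type*} [∀ i, NormedAddCommGroup (E i)] [∀ i, NormedSpace 𝕜 (E i)]
    [∀ i, FiniteDimensional 𝕜 (E i)]
    {F : Γ₂ → Type*} [∀ j, NormedAddCommGroup (F j)] [∀ j, NormedSpace 𝕜 (F j)]
    [∀ j, FiniteDimensional 𝕜 (F j)]
    {p q : ℝ≥0∞} [Fact (1 ≤ p)] [Fact (1 ≤ q)] (hp : 1 < p) (hp' : p ≠ ∞) (hq' : q ≠ ∞)
    (T : lp E p →L[𝕜] lp F q) {l : Filter ι} {x : ι → lp E p} (hx : ∀ n, ‖x n‖ ≤ 1)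
    (hmax : Tendsto (fun n ↦ ‖T (x n)‖) l (𝓝 ‖T‖))
    (hnw : ¬ ∀ f : lp E p →L[𝕜] 𝕜, Tendsto (fun n ↦ f (x n)) l (𝓝 0)) :
    ∃ x₀, ‖x₀‖ = 1 ∧ ‖T x₀‖ = ‖T‖ := by
  have hp1 : 1 < p.toReal := by simpa using (ENNReal.toReal_lt_toReal ENNReal.one_ne_top hp').2 hp
  have hq0 : 0 < q.toReal := ENNReal.toReal_pos (zero_lt_one.trans_le Fact.out).ne' hq'
  have (i : Γ₁) : ProperSpace (E i) := FiniteDimensional.proper_rclike 𝕜 _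
  have (j : Γ₂) : ProperSpace (F j) := FiniteDimensional.proper_rclike 𝕜 _
  obtain ⟨f, hf⟩ := not_forall.1 hnw
  rw [tendsto_iff_ultrafilter] at hf
  push Not at hf
  obtain ⟨U, hU, hfU⟩ := hf
  obtain ⟨y, hy⟩ := exists_tendsto_apply_of_norm_le U hx
  have hgM (n : ι) : ‖x n - y‖ ≤ 1 + ‖y‖ := (norm_sub_le _ _).trans (by gcongr; exact hx n)
  have hg0 (i : Γ₁) : Tendsto (fun n ↦ (x n - y) i) U (𝓝 0) := by
    simpa using (hy i).sub_const (y i)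
  obtain ⟨β, hβ⟩ := exists_normRpowSplits_of_tendsto_apply_zero hp' hgM hg0
  have hy0 : y ≠ 0 := by
    rintro rfl
    exact hfU (by simpa using hβ.tendsto_map_zero hp1 hgM f)
  have hTg0 (j : Γ₂) : Tendsto (fun n ↦ T (x n - y) j) U (𝓝 0) :=
    hβ.tendsto_map_zero hp1 hgM ((lp.evalCLM 𝕜 F q j).comp T)
  obtain ⟨γ, hγ⟩ := exists_normRpowSplits_of_tendsto_apply_zero hq'
    (fun n ↦ T.le_opNorm_of_le (hgM n)) hTg0
  exact exists_norm_eq_one_norm_map_eq_opNorm hy0 <|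
    hβ.opNorm_mul_norm_le_norm_map (zero_lt_one.trans hp1) hq0 hγ hx (hmax.mono_left hU)

/-- for `1 < p < ∞`, `1 ≤ q < ∞` and arbitrary index sets `Γ₁, Γ₂`, the
pair `(ℓ_p(Γ₁), ℓ_q(Γ₂))` has the weak maximizing property: a bounded linear operator
admitting a maximizing sequence not converging weakly to `0` attains its norm. -/
theorem weak_maximizing_lp_lq_general_index {𝕜 : Type*} [RCLike 𝕜] (p q : ℝ≥0∞)
    [Fact (1 ≤ p)] [Fact (1 ≤ q)] (hp : 1 < p) (hp' : p ≠ ⊤) (hq' : q ≠ ⊤)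
    (Γ₁ Γ₂ : Type*)
    (T : lp (fun _ : Γ₁ => 𝕜) p →L[𝕜] lp (fun _ : Γ₂ => 𝕜) q)
    (x : ℕ → lp (fun _ : Γ₁ => 𝕜) p)
    (hx1 : ∀ n, ‖x n‖ = 1)
    (hmax : Tendsto (fun n => ‖T (x n)‖) atTop (𝓝 ‖T‖))
    (hnw : ¬ ∀ f : lp (fun _ : Γ₁ => 𝕜) p →L[𝕜] 𝕜,
      Tendsto (fun n => f (x n)) atTop (𝓝 0)) :
    ∃ x₀, ‖x₀‖ = 1 ∧ ‖T x₀‖ = ‖T‖ :=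
  weak_maximizing_lp_lq_general_index_general hp hp' hq' T (fun n ↦ (hx1 n).le) hmax hnw
end

section
/- Let E be a non-reflexive Banach space and F a nonzero Banach space. Then the pair (E, F) fails the weak maximizing property. Consequently, a pair (E, F) with F ≠ {0} has the weak maximizing property only if E is reflexive; in particular, if E has the weak maximizing property (i.e., the pair (E, E) does), then E is reflexive. -/
open Filter Topology

/-!
By James' theorem a non-reflexive Banach space `E` carries a functional `φ` that does not attain its
norm; for `y₀ ≠ 0` the operator `x ↦ φ x • y₀` does not attain its norm either, while no maximizing
sequence of it is weakly null, because `‖φ (xₙ)‖ → ‖φ‖ ≠ 0`.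

For James' theorem, non-reflexivity gives `fₙ` in the unit ball of the dual such that every element
of the convex hull of the `fₙ` keeps a fixed distance from every weak-star cluster point of convex
blocks of the tails. After stabilising the norms `‖h - w‖` along the weak-star cluster points `w`
(Pryce), choose blocks `yₙ` greedily so that the partial sums of `φ = ∑ (1 - q) qᵏ (yₖ - w)`, with
`w` a weak-star cluster point of `y`, have nearly minimal norms. If `φ x = ‖φ‖` with `‖x‖ ≤ 1`,
minimality bounds each `yₙ x - w x` below by one positive constant, contradicting the choice of `w`.
-/

section GeometricSums

variable {V : Type*} [SeminormedAddCommGroup V] [NormedSpace ℝ V] {q : ℝ} {z : ℕ → V} {s : V}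

/-- The `n`-th partial sum of the series `∑ (1 - q) qᵏ zₖ`, whose weights add up to `1`
when `0 ≤ q < 1`. -/
def geomPartialSum (q : ℝ) (z : ℕ → V) (n : ℕ) : V :=
  ∑ k ∈ Finset.range n, ((1 - q) * q ^ k) • z k

theorem geomPartialSum_succ (q : ℝ) (z : ℕ → V) (n : ℕ) :
    geomPartialSum q z (n + 1) = geomPartialSum q z n + ((1 - q) * q ^ n) • z n :=
  Finset.sum_range_succ _ _

theorem geomPartialSum_sub_const (q : ℝ) (z : ℕ → V) (w : V) (n : ℕ) :
    geomPartialSum q (fun k ↦ z k - w) n = geomPartialSum q z n - (1 - q ^ n) • w := by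
  simp only [geomPartialSum, smul_sub, Finset.sum_sub_distrib, ← Finset.sum_smul,
    ← Finset.mul_sum, mul_neg_geom_sum]

theorem geomPartialSum_mem (p : Submodule ℝ V) (hz : ∀ k, z k ∈ p) (n : ℕ) :
    geomPartialSum q z n ∈ p :=
  p.sum_mem fun k _ ↦ p.smul_mem _ (hz k)

theorem dist_geomPartialSum_succ_le {R : ℝ} (hq0 : 0 ≤ q) (hq1 : q ≤ 1) (hz : ∀ k, ‖z k‖ ≤ R)
    (n : ℕ) :
    dist (geomPartialSum q z n) (geomPartialSum q z (n + 1)) ≤ (1 - q) * R * q ^ n := by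
  have hweight : 0 ≤ (1 - q) * q ^ n := mul_nonneg (sub_nonneg.2 hq1) (pow_nonneg hq0 n)
  rw [geomPartialSum_succ, dist_self_add_right, norm_smul, Real.norm_of_nonneg hweight]
  exact (mul_le_mul_of_nonneg_left (hz n) hweight).trans_eq (by ring)

theorem exists_tendsto_geomPartialSum [CompleteSpace V] {R : ℝ} (hq0 : 0 ≤ q) (hq1 : q < 1)
    (hz : ∀ k, ‖z k‖ ≤ R) : ∃ s, Tendsto (geomPartialSum q z) atTop (𝓝 s) :=
  cauchySeq_tendsto_of_complete <| cauchySeq_of_le_geometric q ((1 - q) * R) hq1 <|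
    dist_geomPartialSum_succ_le hq0 hq1.le hz

theorem norm_sub_geomPartialSum_le {R : ℝ} (hq0 : 0 ≤ q) (hq1 : q < 1) (hz : ∀ k, ‖z k‖ ≤ R)
    (hs : Tendsto (geomPartialSum q z) atTop (𝓝 s)) (n : ℕ) :
    ‖s - geomPartialSum q z n‖ ≤ R * q ^ n := by
  have hdist := dist_le_of_le_geometric_of_tendsto q ((1 - q) * R) hq1
    (dist_geomPartialSum_succ_le hq0 hq1.le hz) hs n
  rwa [dist_comm, dist_eq_norm, mul_assoc, mul_div_cancel_left₀ _ (sub_pos.2 hq1).ne'] at hdist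

theorem tendsto_geomPartialSum_add_smul (hq1 : q < 1)
    (hs : Tendsto (geomPartialSum q z) atTop (𝓝 s)) :
    Tendsto (fun n ↦ geomPartialSum q z n + q ^ n • z n) atTop (𝓝 s) := by
  have hq : 1 - q ≠ 0 := (sub_pos.2 hq1).ne'
  have hlim : Tendsto (fun n ↦ (1 - q)⁻¹ • (geomPartialSum q z (n + 1) - q • geomPartialSum q z n))
      atTop (𝓝 ((1 - q)⁻¹ • (s - q • s))) :=
    ((hs.comp (tendsto_add_atTop_nat 1)).sub (hs.const_smul q)).const_smul _
  convert hlim using 1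
  · funext n
    rw [eq_inv_smul_iff₀ hq, geomPartialSum_succ]
    module
  · congr 1
    rw [eq_inv_smul_iff₀ hq]
    module

end GeometricSums

section ConvexTowers

/-- A decreasing sequence of nonempty convex sets. It plays the role of a sequence of vectors known
only up to convex blocks, with `C n` as the convex hull of the tail from `n` on; passing to smaller
sets replaces the passage to subsequences. -/
structure IsConvexTower {V : Type*} [AddCommGroup V] [Module ℝ V] (C : ℕ → Set V) : Prop where
  antitone : Antitone C
  convex : ∀ n, Convex ℝ (C n)
  nonempty : ∀ n, (C n).Nonempty

theorem isConvexTower_convexHull_image_Ici {V : Type*} [AddCommGroup V] [Module ℝ V] (f : ℕ → V) :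
    IsConvexTower fun n ↦ convexHull ℝ (f '' Set.Ici n) where
  antitone _ _ hmn := convexHull_mono (Set.image_mono (Set.Ici_subset_Ici.2 hmn))
  convex _ := convex_convexHull ℝ _
  nonempty _ := (Set.nonempty_Ici.image f).convexHull

namespace IsConvexTower

section Module

variable {V : Type*} [AddCommGroup V] [Module ℝ V] {C D : ℕ → Set V}

theorem preimage_add_right (hC : IsConvexTower C) (w : V) :
    IsConvexTower fun n ↦ (· + w) ⁻¹' C n where
  antitone _ _ hmn := Set.preimage_mono (hC.antitone hmn)
  convex n := (hC.convex n).translate_preimage_left w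
  nonempty n := (hC.nonempty n).preimage (add_right_surjective w)

/-- The diagonal of successive refinements of `C`, one for each `i`, works. -/
theorem exists_le_forall_of_exists_le {ι : Type*} [Countable ι] {P : ι → (ℕ → Set V) → Prop}
    (hP : ∀ i C D, P i C → (∀ n, ∃ m, D m ⊆ C n) → P i D)
    (hex : ∀ i, ∀ T ≤ C, IsConvexTower T → ∃ D ≤ T, IsConvexTower D ∧ P i D)
    (hC : IsConvexTower C) : ∃ D ≤ C, IsConvexTower D ∧ ∀ i, P i D := by
  cases isEmpty_or_nonempty ι with
  | inl => exact ⟨C, le_rfl, hC, isEmptyElim⟩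
  | inr =>
    obtain ⟨e, he⟩ := exists_surjective_nat ι
    choose next hnext_le hnext hPnext using
      fun j (T : {T : ℕ → Set V // T ≤ C ∧ IsConvexTower T}) ↦ hex (e j) T.1 T.2.1 T.2.2
    let T : ℕ → {T : ℕ → Set V // T ≤ C ∧ IsConvexTower T} := fun j ↦ Nat.rec ⟨C, le_rfl, hC⟩
      (fun j T ↦ ⟨next j T, (hnext_le j T).trans T.2.1, hnext j T⟩) j
    have hT : Antitone fun j ↦ (T j).1 := antitone_nat_of_succ_le fun j ↦ hnext_le j (T j)
    refine ⟨fun n ↦ (T n).1 n, fun n ↦ hT (Nat.zero_le n) n, ⟨?_, ?_, ?_⟩, fun i ↦ ?_⟩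
    · exact fun m n hmn ↦ (hT hmn n).trans ((T m).2.2.antitone hmn)
    · exact fun n ↦ (T n).2.2.convex n
    · exact fun n ↦ (T n).2.2.nonempty n
    · obtain ⟨j, rfl⟩ := he i
      refine hP _ _ _ (hPnext j (T j)) fun n ↦ ⟨max (j + 1) n, ?_⟩
      exact (hT (le_max_left _ _) _).trans ((T (j + 1)).2.2.antitone (le_max_right _ _))

end Module

section Norm

variable {V : Type*} [SeminormedAddCommGroup V] [NormedSpace ℝ V] {C : ℕ → Set V} {q : ℝ}
  {z : ℕ → V}

theorem exists_geomPartialSum_add_smul_eq (hC : IsConvexTower C) (hq0 : 0 ≤ q) (hq1 : q ≤ 1)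
    (hz : ∀ n, z n ∈ C n) {m n : ℕ} (hnm : n ≤ m) {y : V} (hy : y ∈ C m) :
    ∃ y' ∈ C n, geomPartialSum q z m + q ^ m • y = geomPartialSum q z n + q ^ n • y' := by
  induction m, hnm using Nat.le_induction generalizing y with
  | base => exact ⟨y, hy, rfl⟩
  | succ m _ ih =>
    have hmem : (1 - q) • z m + q • y ∈ C m :=
      hC.convex m (hz m) (hC.antitone m.le_succ hy) (sub_nonneg.2 hq1) hq0 (sub_add_cancel 1 q)
    obtain ⟨y', hy', heq⟩ := ih hmem
    refine ⟨y', hy', heq ▸ ?_⟩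
    rw [geomPartialSum_succ, pow_succ]
    module

theorem le_norm_of_tendsto_geomPartialSum (hC : IsConvexTower C) (hq0 : 0 ≤ q) (hq1 : q < 1)
    (hz : ∀ n, z n ∈ C n) {s : V} (hs : Tendsto (geomPartialSum q z) atTop (𝓝 s)) {c : ℝ} (n : ℕ)
    (hc : ∀ y ∈ C n, c ≤ ‖geomPartialSum q z n + q ^ n • y‖) : c ≤ ‖s‖ := by
  refine ge_of_tendsto (tendsto_geomPartialSum_add_smul hq1 hs).norm <|
    eventually_atTop.2 ⟨n, fun m hnm ↦ ?_⟩
  obtain ⟨y, hy, heq⟩ := hC.exists_geomPartialSum_add_smul_eq hq0 hq1.le hz hnm (hz m)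
  exact heq ▸ hc y hy

theorem exists_forall_norm_geomPartialSum_add_smul_le (hC : IsConvexTower C) (q : ℝ) {ε : ℕ → ℝ}
    (hε : ∀ n, 0 < ε n) :
    ∃ z : ℕ → V, (∀ n, z n ∈ C n) ∧ ∀ n, ∀ y ∈ C n,
      ‖geomPartialSum q z n + q ^ n • z n‖ ≤ ‖geomPartialSum q z n + q ^ n • y‖ + ε n := by
  have hmin (n : ℕ) (u : V) : ∃ y ∈ C n, ∀ y' ∈ C n, ‖u + q ^ n • y‖ ≤ ‖u + q ^ n • y'‖ + ε n := by
    obtain ⟨_, ⟨y, hy, rfl⟩, hlt⟩ := exists_lt_of_csInf_lt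
      ((hC.nonempty n).image fun y ↦ ‖u + q ^ n • y‖) (lt_add_of_pos_right _ (hε n))
    have hbdd : BddBelow ((fun y ↦ ‖u + q ^ n • y‖) '' C n) :=
      ⟨0, Set.forall_mem_image.2 fun _ _ ↦ norm_nonneg _⟩
    refine ⟨y, hy, fun y' hy' ↦ hlt.le.trans ?_⟩
    gcongr
    exact csInf_le hbdd (Set.mem_image_of_mem _ hy')
  choose next hnext hnext_min using hmin
  let u : ℕ → V := fun n ↦ Nat.rec 0 (fun n u ↦ u + ((1 - q) * q ^ n) • next n u) n
  have hu (n : ℕ) : geomPartialSum q (fun k ↦ next k (u k)) n = u n := by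
    induction n with
    | zero => rfl
    | succ n ih => rw [geomPartialSum_succ, ih]
  refine ⟨fun n ↦ next n (u n), fun n ↦ hnext n _, fun n y hy ↦ ?_⟩
  rw [hu]
  exact hnext_min n (u n) y hy

/-- The vectors `zₙ` are chosen so that `‖sₙ + qⁿ zₙ‖` is nearly minimal over `C n`, where `sₙ` is
the partial sum. As `s` is a limit of points `sₙ + qⁿ y` with `y ∈ C n`, this forces
`‖sₙ + qⁿ zₙ‖ ≤ ‖s‖ + εₙ`, and `sₙ₊₁ = (1 - q) (sₙ + qⁿ zₙ) + q sₙ` propagates the gap. -/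
theorem exists_norm_geomPartialSum_add_le (hC : IsConvexTower C) (hq0 : 0 < q) (hq1 : q < 1)
    {δ : ℝ} (hδ : 0 < δ) (hCδ : ∀ y ∈ C 0, δ ≤ ‖y‖) :
    ∃ z : ℕ → V, (∀ n, z n ∈ C n) ∧ ∀ s, Tendsto (geomPartialSum q z) atTop (𝓝 s) →
      ∀ n, ‖geomPartialSum q z n‖ + q ^ n * (δ / 2) ≤ ‖s‖ := by
  let ε : ℕ → ℝ := fun n ↦ q ^ (n + 1) * (δ / 2) * (1 / 2) ^ (n + 1)
  obtain ⟨z, hz, hmin⟩ :=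
    hC.exists_forall_norm_geomPartialSum_add_smul_le q (ε := ε) fun n ↦ by positivity
  refine ⟨z, hz, fun s hs n ↦ ?_⟩
  have hs_ge : δ ≤ ‖s‖ :=
    hC.le_norm_of_tendsto_geomPartialSum hq0.le hq1 hz hs 0 fun y hy ↦ by
      simpa [geomPartialSum] using hCδ y hy
  have hnear (n : ℕ) : ‖geomPartialSum q z n + q ^ n • z n‖ ≤ ‖s‖ + ε n :=
    sub_le_iff_le_add.1 <| hC.le_norm_of_tendsto_geomPartialSum hq0.le hq1 hz hs n fun y hy ↦
      sub_le_iff_le_add.2 (hmin n y hy)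
  have hgap (n : ℕ) :
      ‖geomPartialSum q z n‖ + q ^ n * (δ / 2) * (1 + (1 / 2) ^ n) ≤ ‖s‖ := by
    induction n with
    | zero => simpa [geomPartialSum, one_add_one_eq_two] using hs_ge
    | succ n ih =>
      have hstep : geomPartialSum q z (n + 1) =
          (1 - q) • (geomPartialSum q z n + q ^ n • z n) + q • geomPartialSum q z n := by
        rw [geomPartialSum_succ]
        module
      have hqε : 0 ≤ q * ε n := by positivity
      have hε_eq : q ^ (n + 1) * (δ / 2) * (1 + (1 / 2) ^ (n + 1)) =
          q * (q ^ n * (δ / 2) * (1 + (1 / 2) ^ n)) - ε n := by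
        simp only [ε]
        ring
      have hle : ‖geomPartialSum q z (n + 1)‖ ≤
          (1 - q) * (‖s‖ + ε n) + q * (‖s‖ - q ^ n * (δ / 2) * (1 + (1 / 2) ^ n)) := by
        rw [hstep]
        refine norm_add_le_of_le ?_ ?_ <;> rw [norm_smul, Real.norm_of_nonneg (by linarith)]
        · exact mul_le_mul_of_nonneg_left (hnear n) (by linarith)
        · exact mul_le_mul_of_nonneg_left (by linarith) hq0.le
      linarith
  have hpos : 0 ≤ q ^ n * (δ / 2) * (1 / 2) ^ n := by positivity
  linarith [hgap n]

end Norm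

end IsConvexTower

end ConvexTowers

section WeakStarLimits

variable {E : Type*} [NormedAddCommGroup E] [NormedSpace ℝ E] {C D : ℕ → Set (StrongDual ℝ E)}
  {y : ℕ → StrongDual ℝ E} {w : StrongDual ℝ E}

theorem exists_norm_le_one_and_lt_apply {f : StrongDual ℝ E} {r : ℝ} (hr : r < ‖f‖) :
    ∃ x, ‖x‖ ≤ 1 ∧ r < f x := by
  obtain ⟨x, hx, hlt⟩ := f.exists_lt_apply_of_lt_opNorm hr
  rcases lt_abs.1 hlt with hpos | hneg
  · exact ⟨x, hx.le, hpos⟩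
  · exact ⟨-x, by rw [norm_neg]; exact hx.le, by rwa [map_neg]⟩

/-- The functionals lying in the weak-star closure of every `C n`: the weak-star cluster points of
the filter generated by the decreasing sequence `C`. -/
def weakStarLimits (C : ℕ → Set (StrongDual ℝ E)) : Set (StrongDual ℝ E) :=
  {w | ∀ n, StrongDual.toWeakDual w ∈ closure (StrongDual.toWeakDual '' C n)}

theorem weakStarLimits_mono (h : ∀ n, ∃ m, D m ⊆ C n) : weakStarLimits D ⊆ weakStarLimits C :=
  fun _ hw n ↦
    let ⟨m, hm⟩ := h n
    closure_mono (Set.image_mono hm) (hw m)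

theorem apply_mem_closure_of_mem_weakStarLimits (hw : w ∈ weakStarLimits C) (n : ℕ) (x : E) :
    w x ∈ closure ((fun f : StrongDual ℝ E ↦ f x) '' C n) := by
  have hmem := image_closure_subset_closure_image (WeakDual.eval_continuous x)
    (Set.mem_image_of_mem _ (hw n))
  rwa [Set.image_image] at hmem

theorem apply_eq_of_mem_weakStarLimits {x : E} {c : ℝ} {n : ℕ} (hC : ∀ f ∈ C n, f x = c)
    (hw : w ∈ weakStarLimits C) : w x = c :=
  closure_minimal (t := {c}) (Set.image_subset_iff.2 hC) isClosed_singleton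
    (apply_mem_closure_of_mem_weakStarLimits hw n x)

theorem norm_le_of_mem_weakStarLimits {r : ℝ} {n : ℕ} (hC : ∀ f ∈ C n, ‖f‖ ≤ r)
    (hw : w ∈ weakStarLimits C) : ‖w‖ ≤ r := by
  have hsub : closure (StrongDual.toWeakDual '' C n) ⊆
      WeakDual.toStrongDual ⁻¹' Metric.closedBall 0 r := by
    refine closure_minimal ?_ (WeakDual.isClosed_closedBall 0 r)
    rintro _ ⟨f, hf, rfl⟩
    simpa using hC f hf
  simpa using hsub (hw n)

theorem exists_mapClusterPt_toWeakDual {r : ℝ} (hy : ∀ n, ‖y n‖ ≤ r) :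
    ∃ w : StrongDual ℝ E,
      MapClusterPt (StrongDual.toWeakDual w) atTop fun n ↦ StrongDual.toWeakDual (y n) := by
  obtain ⟨w, -, hw⟩ := (WeakDual.isCompact_closedBall (𝕜 := ℝ) (E := E) 0 r).exists_mapClusterPt
    (f := atTop) (u := fun n ↦ StrongDual.toWeakDual (y n)) <|
      tendsto_principal.2 <| Eventually.of_forall fun n ↦ by simpa using hy n
  exact ⟨WeakDual.toStrongDual w, hw⟩

theorem mem_weakStarLimits_of_mapClusterPt (hC : Antitone C) (hy : ∀ n, y n ∈ C n)
    (hw : MapClusterPt (StrongDual.toWeakDual w) atTop fun n ↦ StrongDual.toWeakDual (y n)) :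
    w ∈ weakStarLimits C := fun n ↦
  hw.clusterPt.mem_closure_of_mem _ <| eventually_atTop.2
    ⟨n, fun m hnm ↦ Set.mem_image_of_mem _ (hC hnm (hy m))⟩

namespace IsConvexTower

theorem nonempty_weakStarLimits (hC : IsConvexTower C) {r : ℝ} (hCr : ∀ f ∈ C 0, ‖f‖ ≤ r) :
    (weakStarLimits C).Nonempty := by
  choose y hy using hC.nonempty
  obtain ⟨w, hw⟩ := exists_mapClusterPt_toWeakDual
    fun n ↦ hCr (y n) (hC.antitone n.zero_le (hy n))
  exact ⟨w, mem_weakStarLimits_of_mapClusterPt hC.antitone hy hw⟩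

theorem inter_halfSpace (hC : IsConvexTower C) (hw : w ∈ weakStarLimits C) {x : E} {r : ℝ}
    (hr : w x < r) : IsConvexTower fun n ↦ C n ∩ {f | f x < r} where
  antitone _ _ hmn := Set.inter_subset_inter_left _ (hC.antitone hmn)
  convex n := (hC.convex n).inter <|
    convex_halfSpace_lt (NormedSpace.inclusionInDoubleDual ℝ E x).toLinearMap.isLinear r
  nonempty n := by
    obtain ⟨_, hlt, f, hf, rfl⟩ := mem_closure_iff.1
      (apply_mem_closure_of_mem_weakStarLimits hw n x) _ isOpen_Iio hr
    exact ⟨f, hf, hlt⟩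

/-- Cutting `C` by a half-space on which `h - w` is nearly as large as possible makes `‖h - w‖`
nearly maximal for all remaining `w`. -/
theorem exists_le_norm_sub_le_add (hC : IsConvexTower C) {r : ℝ} (hCr : ∀ f ∈ C 0, ‖f‖ ≤ r)
    (h : StrongDual ℝ E) {ε : ℝ} (hε : 0 < ε) :
    ∃ D ≤ C, IsConvexTower D ∧
      ∀ w ∈ weakStarLimits D, ∀ w' ∈ weakStarLimits D, ‖h - w‖ ≤ ‖h - w'‖ + ε := by
  let N : Set ℝ := (‖h - ·‖) '' weakStarLimits C
  have hN : BddAbove N := ⟨‖h‖ + r, Set.forall_mem_image.2 fun w hw ↦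
    norm_sub_le_of_le le_rfl (norm_le_of_mem_weakStarLimits hCr hw)⟩
  obtain ⟨_, ⟨w₀, hw₀, rfl⟩, hlt⟩ := exists_lt_of_lt_csSup
    ((hC.nonempty_weakStarLimits hCr).image _) (sub_lt_self (sSup N) hε)
  obtain ⟨x, hx, hlt_x⟩ := exists_norm_le_one_and_lt_apply hlt
  have hle : (fun n ↦ C n ∩ {f | f x < h x - (sSup N - ε)}) ≤ C := fun n ↦ Set.inter_subset_left
  refine ⟨_, hle, hC.inter_halfSpace hw₀ (lt_sub_comm.1 hlt_x), fun w hw w' hw' ↦ ?_⟩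
  have hsup : ‖h - w‖ ≤ sSup N :=
    le_csSup hN (Set.mem_image_of_mem _ (weakStarLimits_mono (fun n ↦ ⟨n, hle n⟩) hw))
  have hw'x : w' x ≤ h x - (sSup N - ε) := by
    refine closure_minimal ?_ isClosed_Iic (apply_mem_closure_of_mem_weakStarLimits hw' 0 x)
    rintro _ ⟨f, hf, rfl⟩
    exact (show f x < h x - (sSup N - ε) from hf.2).le
  have hnorm : h x - w' x ≤ ‖h - w'‖ :=
    (le_abs_self _).trans ((h - w').unit_le_opNorm x hx)
  linarith

theorem exists_le_norm_sub_eq (hC : IsConvexTower C) {r : ℝ} (hCr : ∀ f ∈ C 0, ‖f‖ ≤ r)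
    (h : StrongDual ℝ E) :
    ∃ D ≤ C, IsConvexTower D ∧
      ∀ w ∈ weakStarLimits D, ∀ w' ∈ weakStarLimits D, ‖h - w‖ = ‖h - w'‖ := by
  obtain ⟨D, hDC, hD, hosc⟩ := hC.exists_le_forall_of_exists_le
    (P := fun (k : ℕ) T ↦ ∀ w ∈ weakStarLimits T, ∀ w' ∈ weakStarLimits T,
      ‖h - w‖ ≤ ‖h - w'‖ + 1 / (k + 1))
    (fun _ _ _ hT hsub w hw w' hw' ↦
      hT w (weakStarLimits_mono hsub hw) w' (weakStarLimits_mono hsub hw'))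
    (fun _ _ hTC hT ↦ hT.exists_le_norm_sub_le_add (fun f hf ↦ hCr f (hTC 0 hf)) h
      Nat.one_div_pos_of_nat)
  have hle : ∀ w ∈ weakStarLimits D, ∀ w' ∈ weakStarLimits D, ‖h - w‖ ≤ ‖h - w'‖ :=
    fun w hw w' hw' ↦ le_of_forall_pos_lt_add fun ε hε ↦
      let ⟨k, hk⟩ := exists_nat_one_div_lt hε
      (hosc k w hw w' hw').trans_lt (add_lt_add_right hk _)
  exact ⟨D, hDC, hD, fun w hw w' hw' ↦ (hle w hw w' hw').antisymm (hle w' hw' w hw)⟩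

theorem exists_le_forall_norm_sub_eq (hC : IsConvexTower C) {r : ℝ} (hCr : ∀ f ∈ C 0, ‖f‖ ≤ r)
    {S : Set (StrongDual ℝ E)} (hS : TopologicalSpace.IsSeparable S) :
    ∃ D ≤ C, IsConvexTower D ∧
      ∀ h ∈ S, ∀ w ∈ weakStarLimits D, ∀ w' ∈ weakStarLimits D, ‖h - w‖ = ‖h - w'‖ := by
  obtain ⟨c, hc, hSc⟩ := hS
  have := hc.to_subtype
  obtain ⟨D, hDC, hD, hDc⟩ := hC.exists_le_forall_of_exists_le
    (P := fun (h : c) T ↦ ∀ w ∈ weakStarLimits T, ∀ w' ∈ weakStarLimits T,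
      ‖h.1 - w‖ = ‖h.1 - w'‖)
    (fun _ _ _ hT hsub w hw w' hw' ↦
      hT w (weakStarLimits_mono hsub hw) w' (weakStarLimits_mono hsub hw'))
    (fun h _ hTC hT ↦ hT.exists_le_norm_sub_eq (fun f hf ↦ hCr f (hTC 0 hf)) h)
  refine ⟨D, hDC, hD, fun h hh w hw w' hw' ↦ ?_⟩
  have hclosed : IsClosed {h | ‖h - w‖ = ‖h - w'‖} := isClosed_eq (by fun_prop) (by fun_prop)
  exact closure_minimal (fun g hg ↦ hDc ⟨g, hg⟩ w hw w' hw') hclosed (hSc hh)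

end IsConvexTower

end WeakStarLimits

section NonAttainment

variable {E : Type*} [NormedAddCommGroup E] [NormedSpace ℝ E]

theorem norm_sub_smul_eq_of_forall_mem {V : Type*} [SeminormedAddCommGroup V] [NormedSpace ℝ V]
    {p : Submodule ℝ V} {w w' : V} (hww' : ∀ v ∈ p, ‖v - w‖ = ‖v - w'‖) {v : V} (hv : v ∈ p)
    (t : ℝ) : ‖v - t • w‖ = ‖v - t • w'‖ := by
  rcases eq_or_ne t 0 with rfl | ht
  · simp only [zero_smul]
  · have hscale (u : V) : v - t • u = t • (t⁻¹ • v - u) := by rw [smul_sub, smul_inv_smul₀ ht]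
    rw [hscale w, hscale w', norm_smul, norm_smul, hww' _ (p.smul_mem _ hv)]

theorem sub_le_mul_apply_of_norm_le_apply {q R γ : ℝ} (hq0 : 0 < q) (hq1 : q < 1)
    {z : ℕ → StrongDual ℝ E} {s : StrongDual ℝ E} (hz : ∀ k, ‖z k‖ ≤ R)
    (hs : Tendsto (geomPartialSum q z) atTop (𝓝 s)) {n : ℕ}
    (hgap : ‖geomPartialSum q z n‖ + q ^ n * γ ≤ ‖s‖) {x : E} (hx : ‖x‖ ≤ 1) (hsx : ‖s‖ ≤ s x) :
    γ - q * R ≤ (1 - q) * z n x := by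
  have happly (f : StrongDual ℝ E) : f x ≤ ‖f‖ := (le_abs_self _).trans (f.unit_le_opNorm x hx)
  have htail := (happly _).trans (norm_sub_geomPartialSum_le hq0.le hq1 hz hs (n + 1))
  have hhead := happly (geomPartialSum q z n)
  have hsplit : s x = geomPartialSum q z n x + (1 - q) * q ^ n * z n x +
      (s - geomPartialSum q z (n + 1)) x := by
    rw [geomPartialSum_succ]
    simp only [sub_apply, add_apply, smul_apply, smul_eq_mul]
    ring
  rw [pow_succ] at htail
  refine le_of_mul_le_mul_left ?_ (pow_pos hq0 n)
  linarith

/-- After stabilising, all weak-star limits `w` of the tower give the same norm to every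
`sₙ(y) - (1 - qⁿ) • w`, where `sₙ(y)` is the partial sum. Hence the gap obtained for one limit `w₀`,
chosen before the sequence `y`, also holds for a cluster point `w` of `y` itself. -/
theorem IsConvexTower.exists_norm_geomPartialSum_sub_add_le {C : ℕ → Set (StrongDual ℝ E)}
    (hC : IsConvexTower C) {r : ℝ} (hCr : ∀ f ∈ C 0, ‖f‖ ≤ r)
    (hsep : TopologicalSpace.IsSeparable (C 0)) {δ : ℝ} (hδ : 0 < δ)
    (hCδ : ∀ w ∈ weakStarLimits C, ∀ f ∈ C 0, δ ≤ ‖f - w‖) {q : ℝ} (hq0 : 0 < q) (hq1 : q < 1) :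
    ∃ (y : ℕ → StrongDual ℝ E) (w s : StrongDual ℝ E), (∀ n, ‖y n - w‖ ≤ r + r) ∧
      MapClusterPt (StrongDual.toWeakDual w) atTop (fun n ↦ StrongDual.toWeakDual (y n)) ∧
      Tendsto (geomPartialSum q fun k ↦ y k - w) atTop (𝓝 s) ∧
      ∀ n, ‖geomPartialSum q (fun k ↦ y k - w) n‖ + q ^ n * (δ / 2) ≤ ‖s‖ := by
  let S := Submodule.span ℝ (C 0)
  have hS : TopologicalSpace.IsSeparable (S : Set (StrongDual ℝ E)) := hsep.span
  obtain ⟨D, hDC, hD, hstable⟩ := hC.exists_le_forall_norm_sub_eq hCr hS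
  have hDr : ∀ f ∈ D 0, ‖f‖ ≤ r := fun f hf ↦ hCr f (hDC 0 hf)
  have hDlim : weakStarLimits D ⊆ weakStarLimits C := weakStarLimits_mono fun n ↦ ⟨n, hDC n⟩
  obtain ⟨w₀, hw₀⟩ := hD.nonempty_weakStarLimits hDr
  obtain ⟨z, hz, hgap⟩ := (hD.preimage_add_right w₀).exists_norm_geomPartialSum_add_le hq0 hq1 hδ
    fun f hf ↦ by simpa using hCδ w₀ (hDlim hw₀) _ (hDC 0 hf)
  obtain ⟨y, rfl⟩ : ∃ y : ℕ → StrongDual ℝ E, z = fun k ↦ y k - w₀ :=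
    ⟨fun k ↦ z k + w₀, funext fun k ↦ (add_sub_cancel_right _ _).symm⟩
  have hyD (n : ℕ) : y n ∈ D n := by simpa using hz n
  have hyD0 (n : ℕ) : y n ∈ D 0 := hD.antitone n.zero_le (hyD n)
  obtain ⟨w, hw⟩ := exists_mapClusterPt_toWeakDual fun n ↦ hDr _ (hyD0 n)
  have hwD : w ∈ weakStarLimits D := mem_weakStarLimits_of_mapClusterPt hD.antitone hyD hw
  have hbound {u : StrongDual ℝ E} (hu : u ∈ weakStarLimits D) (n : ℕ) : ‖y n - u‖ ≤ r + r :=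
    norm_sub_le_of_le (hDr _ (hyD0 n)) (norm_le_of_mem_weakStarLimits hDr hu)
  have hnorm (n : ℕ) : ‖geomPartialSum q (fun k ↦ y k - w) n‖ =
      ‖geomPartialSum q (fun k ↦ y k - w₀) n‖ := by
    rw [geomPartialSum_sub_const, geomPartialSum_sub_const]
    exact norm_sub_smul_eq_of_forall_mem (p := S) (fun h hh ↦ hstable h hh w hwD w₀ hw₀)
      (geomPartialSum_mem S (fun k ↦ Submodule.subset_span (hDC 0 (hyD0 k))) n) _
  obtain ⟨s, hs⟩ := exists_tendsto_geomPartialSum hq0.le hq1 (hbound hwD)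
  obtain ⟨s₀, hs₀⟩ := exists_tendsto_geomPartialSum hq0.le hq1 (hbound hw₀)
  have hss₀ : ‖s‖ = ‖s₀‖ :=
    tendsto_nhds_unique hs.norm (hs₀.norm.congr fun n ↦ (hnorm n).symm)
  exact ⟨y, w, s, hbound hwD, hw, hs, fun n ↦ hss₀ ▸ hnorm n ▸ hgap s₀ hs₀ n⟩

theorem IsConvexTower.exists_forall_apply_lt_norm {C : ℕ → Set (StrongDual ℝ E)}
    (hC : IsConvexTower C) {r : ℝ} (hCr : ∀ f ∈ C 0, ‖f‖ ≤ r)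
    (hsep : TopologicalSpace.IsSeparable (C 0)) {δ : ℝ} (hδ : 0 < δ)
    (hCδ : ∀ w ∈ weakStarLimits C, ∀ f ∈ C 0, δ ≤ ‖f - w‖) :
    ∃ φ : StrongDual ℝ E, ∀ x, ‖x‖ ≤ 1 → φ x < ‖φ‖ := by
  obtain ⟨q, ⟨hq0, hq1⟩, hqδ⟩ : ∃ q : ℝ, (0 < q ∧ q < 1) ∧ 0 < δ / 2 - q * (r + r) := by
    have hlim : Tendsto (fun q : ℝ ↦ δ / 2 - q * (r + r)) (𝓝[>] 0) (𝓝 (δ / 2 - 0 * (r + r))) :=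
      ((by fun_prop : Continuous fun q : ℝ ↦ δ / 2 - q * (r + r)).tendsto 0).mono_left
        nhdsWithin_le_nhds
    have hunit : ∀ᶠ q : ℝ in 𝓝[>] 0, 0 < q ∧ q < 1 := Ioo_mem_nhdsGT one_pos
    exact (hunit.and (hlim.eventually (lt_mem_nhds (by simpa using hδ)))).exists
  obtain ⟨y, w, φ, hyw, hw, hφ, hgap⟩ :=
    hC.exists_norm_geomPartialSum_sub_add_le hCr hsep hδ hCδ hq0 hq1
  refine ⟨φ, fun x hx ↦ lt_of_not_ge fun hφx ↦ ?_⟩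
  have hsep_x (n : ℕ) : δ / 2 - q * (r + r) ≤ (1 - q) * (y n x - w x) :=
    sub_le_mul_apply_of_norm_le_apply hq0 hq1 hyw hφ (hgap n) hx hφx
  have hcluster : MapClusterPt (w x) atTop fun n ↦ y n x :=
    hw.continuousAt_comp (WeakDual.eval_continuous x).continuousAt
  have hclose : ∀ᶠ t in 𝓝 (w x), (1 - q) * (t - w x) < δ / 2 - q * (r + r) :=
    (by fun_prop : Continuous fun t ↦ (1 - q) * (t - w x)).continuousAt.eventually
      (gt_mem_nhds (by simpa using hqδ))
  obtain ⟨n, hn⟩ := (hcluster.frequently hclose).exists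
  exact (hsep_x n).not_gt hn

end NonAttainment

section NonReflexive

variable {E : Type*} [NormedAddCommGroup E] [NormedSpace ℝ E]
  {X : StrongDual ℝ (StrongDual ℝ E)}

open NormedSpace (inclusionInDoubleDual)

/-- Helly's condition: otherwise a functional on `s → ℝ` separates the image of the unit ball
from the open orthant containing `(X f)_{f ∈ s}`, and the corresponding combination `h` of `s`
violates `|X h| ≤ ‖h‖`. -/
theorem exists_norm_le_one_and_forall_lt_apply (hX : ‖X‖ ≤ 1) {θ : ℝ}
    (s : Finset (StrongDual ℝ E)) (hs : ∀ f ∈ s, θ < X f) : ∃ x, ‖x‖ ≤ 1 ∧ ∀ f ∈ s, θ < f x := by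
  classical
  by_contra! hball
  let L : E →L[ℝ] (s → ℝ) := ContinuousLinearMap.pi Subtype.val
  have hdisj : Disjoint (Set.univ.pi fun _ ↦ Set.Ioi θ) (L '' Metric.closedBall 0 1) := by
    refine Set.disjoint_right.2 (Set.forall_mem_image.2 fun x hx hLx ↦ ?_)
    obtain ⟨f, hf, hfx⟩ := hball x (mem_closedBall_zero_iff.1 hx)
    exact hfx.not_gt (hLx ⟨f, hf⟩ trivial)
  obtain ⟨φ, u, hlt, hle⟩ := geometric_hahn_banach_open (convex_pi fun _ _ ↦ convex_Ioi θ)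
    (isOpen_set_pi Set.finite_univ fun _ _ ↦ isOpen_Ioi)
    ((convex_closedBall 0 1).linear_image L.toLinearMap) hdisj
  obtain ⟨c, hc⟩ : ∃ c : s → ℝ, ∀ v, φ v = ∑ f, c f * v f :=
    ⟨_, fun v ↦ by simpa [mul_comm] using φ.toLinearMap.pi_apply_eq_sum_univ v⟩
  let h : StrongDual ℝ E := ∑ f : s, c f • f.1
  have hXh : X h < u := by
    have hXφ : X h = φ fun f ↦ X f := by simp [h, hc]
    exact hXφ ▸ hlt _ fun f _ ↦ hs f f.2
  have hball_le (x : E) (hx : ‖x‖ ≤ 1) : u ≤ h x := by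
    have hLφ : h x = φ (L x) := by simp [h, hc, L]
    exact hLφ ▸ hle _ (Set.mem_image_of_mem _ (mem_closedBall_zero_iff.2 hx))
  have hnorm : -u < ‖-h‖ := calc
    -u < X (-h) := by simpa using hXh
    _ ≤ ‖-h‖ := (le_abs_self _).trans ((X.le_of_opNorm_le hX _).trans_eq (one_mul _))
  obtain ⟨x, hx, hux⟩ := exists_norm_le_one_and_lt_apply hnorm
  exact (hball_le x hx).not_gt (neg_lt_neg_iff.1 hux)

theorem exists_forall_apply_eq_zero_and_lt_apply {θ : ℝ}
    (hX : ∀ x, θ < ‖X - inclusionInDoubleDual ℝ E x‖) (s : Finset E) :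
    ∃ f : StrongDual ℝ E, ‖f‖ ≤ 1 ∧ (∀ x ∈ s, f x = 0) ∧ θ < X f := by
  let J := inclusionInDoubleDual ℝ E
  let M : Submodule ℝ (StrongDual ℝ E) := ⨅ x : s, LinearMap.ker (J x).toLinearMap
  obtain ⟨Y, hYX, hY⟩ := exists_extension_norm_eq M (X.comp M.subtypeL)
  have hker : M ≤ LinearMap.ker (X - Y).toLinearMap := fun f hf ↦
    sub_eq_zero.2 (hYX ⟨f, hf⟩).symm
  obtain ⟨c, hc⟩ := (Submodule.mem_span_range_iff_exists_fun ℝ).1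
    (mem_span_of_iInf_ker_le_ker hker)
  have hXY : X - J (∑ x, c x • (x : E)) = Y := by
    ext f
    have hcf := LinearMap.congr_fun hc f
    simp only [J, ContinuousLinearMap.toLinearMap_sub, LinearMap.sub_apply, LinearMap.coe_sum,
      LinearMap.coe_smul, ContinuousLinearMap.coe_coe, Finset.sum_apply, Pi.smul_apply,
      NormedSpace.dual_def, map_sum, map_smul, sub_apply, sum_apply, smul_apply] at hcf ⊢
    linarith
  obtain ⟨f, hf, hXf⟩ := exists_norm_le_one_and_lt_apply (hY ▸ hXY ▸ hX _)
  refine ⟨f, hf, fun x hx ↦ ?_, hXf⟩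
  exact Submodule.mem_iInf _ |>.1 f.2 ⟨x, hx⟩

/-- Functionals vanishing on `x₀, …, xₙ₋₁` come from Hahn-Banach and then `xₙ` comes from Helly's
condition, the functional `X` at positive distance from `E` being kept as a common witness. -/
theorem exists_seq_apply_eq_zero_and_lt_apply [CompleteSpace E]
    (hE : ¬ Function.Surjective (inclusionInDoubleDual ℝ E)) {θ : ℝ} (hθ : θ < 1) :
    ∃ (f : ℕ → StrongDual ℝ E) (x : ℕ → E), (∀ n, ‖f n‖ ≤ 1) ∧ (∀ n, ‖x n‖ ≤ 1) ∧
      (∀ m n, m < n → f n (x m) = 0) ∧ ∀ m n, m ≤ n → θ < f m (x n) := by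
  classical
  obtain ⟨θ', hθθ', hθ'⟩ := exists_between hθ
  let R : Submodule ℝ (StrongDual ℝ (StrongDual ℝ E)) :=
    LinearMap.range (inclusionInDoubleDual ℝ E).toLinearMap
  have hR : IsClosed (R : Set (StrongDual ℝ (StrongDual ℝ E))) := by
    rw [LinearMap.coe_range]
    exact (NormedSpace.inclusionInDoubleDualLi (E := E) ℝ).isometry.isUniformInducing
      |>.isComplete_range.isClosed
  have hR_proper : ∃ Y : StrongDual ℝ (StrongDual ℝ E), Y ∉ R := not_forall.1 hE
  obtain ⟨X, -, hX, hdist⟩ := riesz_lemma_of_lt_one (𝕜 := ℝ)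
    (E := StrongDual ℝ (StrongDual ℝ E)) (F := R) hR hR_proper hθ'
  have hdist_lt (x : E) : θ < ‖X - inclusionInDoubleDual ℝ E x‖ :=
    hθθ'.trans_le (hdist _ ⟨x, rfl⟩)
  obtain ⟨p, hp, hpp⟩ := exists_seq_of_forall_finset_exists
    (fun p : StrongDual ℝ E × E ↦ (‖p.1‖ ≤ 1 ∧ θ < X p.1) ∧ ‖p.2‖ ≤ 1 ∧ θ < p.1 p.2)
    (fun p p' ↦ p'.1 p.2 = 0 ∧ θ < p.1 p'.2) fun s hs ↦ by
      obtain ⟨f, hf, hf_zero, hXf⟩ :=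
        exists_forall_apply_eq_zero_and_lt_apply hdist_lt (s.image Prod.snd)
      obtain ⟨x, hx, hx_lt⟩ := exists_norm_le_one_and_forall_lt_apply hX.le (θ := θ)
        (insert f (s.image Prod.fst)) (by simpa [hXf] using fun g x hgx ↦ (hs (g, x) hgx).1.2)
      exact ⟨(f, x), ⟨⟨hf, hXf⟩, hx, hx_lt f (Finset.mem_insert_self _ _)⟩, fun p hp ↦
        ⟨hf_zero _ (Finset.mem_image_of_mem _ hp),
          hx_lt _ (Finset.mem_insert_of_mem (Finset.mem_image_of_mem _ hp))⟩⟩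
  refine ⟨fun n ↦ (p n).1, fun n ↦ (p n).2, fun n ↦ (hp n).1.1, fun n ↦ (hp n).2.1,
    fun m n hmn ↦ (hpp m n hmn).1, fun m n hmn ↦ ?_⟩
  rcases hmn.eq_or_lt with rfl | hlt
  · exact (hp m).2.2
  · exact (hpp m n hlt).2

theorem le_norm_sub_of_mem_weakStarLimits {f : ℕ → StrongDual ℝ E} {x : ℕ → E} {θ : ℝ}
    (hx : ∀ n, ‖x n‖ ≤ 1) (hf_zero : ∀ m n, m < n → f n (x m) = 0)
    (hf_lt : ∀ m n, m ≤ n → θ < f m (x n)) {w : StrongDual ℝ E}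
    (hw : w ∈ weakStarLimits fun n ↦ convexHull ℝ (f '' Set.Ici n)) {g : StrongDual ℝ E}
    (hg : g ∈ convexHull ℝ (Set.range f)) : θ ≤ ‖g - w‖ := by
  have hw_zero (m : ℕ) : w (x m) = 0 := by
    refine apply_eq_of_mem_weakStarLimits (n := m + 1) (fun h hh ↦ ?_) hw
    refine convexHull_min (t := LinearMap.ker (inclusionInDoubleDual ℝ E (x m)).toLinearMap) ?_
      (Submodule.convex _) hh
    rintro _ ⟨n, hn, rfl⟩
    exact hf_zero m n hn
  have hconvex : Convex ℝ {h : StrongDual ℝ E | ∀ᶠ n in atTop, θ < h (x n)} :=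
    fun h hh h' hh' a b ha hb hab ↦ (hh.and hh').mono fun _ hn ↦
      (convex_Ioi θ) hn.1 hn.2 ha hb hab
  have hg_lt : ∀ᶠ n in atTop, θ < g (x n) :=
    convexHull_min (t := {h : StrongDual ℝ E | ∀ᶠ n in atTop, θ < h (x n)})
      (Set.range_subset_iff.2 fun m ↦ eventually_atTop.2 ⟨m, hf_lt m⟩) hconvex hg
  obtain ⟨n, hn⟩ := hg_lt.exists
  calc θ ≤ (g - w) (x n) := by simpa [hw_zero] using hn.le
    _ ≤ ‖g - w‖ := (le_abs_self _).trans ((g - w).unit_le_opNorm _ (hx n))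

theorem exists_forall_apply_lt_norm [CompleteSpace E]
    (hE : ¬ Function.Surjective (inclusionInDoubleDual ℝ E)) :
    ∃ φ : StrongDual ℝ E, ∀ x, ‖x‖ ≤ 1 → φ x < ‖φ‖ := by
  obtain ⟨f, x, hf, hx, hf_zero, hf_lt⟩ := exists_seq_apply_eq_zero_and_lt_apply hE one_half_lt_one
  have hrange : f '' Set.Ici 0 = Set.range f := by
    rw [← Nat.bot_eq_zero, Set.Ici_bot, Set.image_univ]
  refine (isConvexTower_convexHull_image_Ici f).exists_forall_apply_lt_norm (r := 1) ?_ ?_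
    one_half_pos fun w hw g hg ↦
      le_norm_sub_of_mem_weakStarLimits hx hf_zero hf_lt hw (hrange ▸ hg)
  · rw [hrange]
    exact fun g hg ↦ by
      simpa using convexHull_min (Set.range_subset_iff.2 fun n ↦ by simpa using hf n)
        (convex_closedBall (0 : StrongDual ℝ E) 1) hg
  · rw [hrange]
    exact (Set.countable_range f).isSeparable.span.mono <|
      (convexHull_subset_affineSpan _).trans affineSpan_subset_span

end NonReflexive

section RCLike

variable {𝕜 E F : Type*} [RCLike 𝕜] [NormedAddCommGroup E] [NormedSpace 𝕜 E]

theorem surjective_inclusionInDoubleDual_of_real [NormedSpace ℝ E] [IsScalarTower ℝ 𝕜 E]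
    (hE : Function.Surjective (NormedSpace.inclusionInDoubleDual ℝ E)) :
    Function.Surjective (NormedSpace.inclusionInDoubleDual 𝕜 E) := by
  intro X
  let e : StrongDual ℝ E ≃ₗᵢ[ℝ] StrongDual 𝕜 E := StrongDual.extendRCLikeₗᵢ
  obtain ⟨x, hx⟩ := hE ((RCLike.reCLM ∘L X.restrictScalars ℝ) ∘L
    e.toContinuousLinearEquiv.toContinuousLinearMap)
  have hre (h : StrongDual 𝕜 E) : RCLike.re (h x) = RCLike.re (X h) := by
    obtain ⟨g, rfl⟩ := e.surjective h
    exact (StrongDual.re_extendRCLike_apply g x).trans (DFunLike.congr_fun hx g)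
  refine ⟨x, ContinuousLinearMap.ext fun h ↦ RCLike.ext (hre h) ?_⟩
  simpa [RCLike.I_mul_re] using hre ((RCLike.I : 𝕜) • h)

theorem exists_forall_norm_apply_lt_norm [CompleteSpace E]
    (hE : ¬ Function.Surjective (NormedSpace.inclusionInDoubleDual 𝕜 E)) :
    ∃ φ : StrongDual 𝕜 E, ∀ x, ‖x‖ ≤ 1 → ‖φ x‖ < ‖φ‖ := by
  let _ : NormedSpace ℝ E := NormedSpace.restrictScalars ℝ 𝕜 E
  have : IsScalarTower ℝ 𝕜 E := RestrictScalars.isScalarTower _ _ _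
  obtain ⟨g, hg⟩ := exists_forall_apply_lt_norm (mt surjective_inclusionInDoubleDual_of_real hE)
  refine ⟨g.extendRCLike, fun x hx ↦ ?_⟩
  obtain ⟨c, hc, hcx⟩ := RCLike.exists_norm_eq_mul_self (g.extendRCLike x : 𝕜)
  have hrot : ‖(g.extendRCLike x : 𝕜)‖ = g (c • x) := by
    rw [← StrongDual.re_extendRCLike_apply (𝕜 := 𝕜) g, map_smul, smul_eq_mul, ← hcx,
      RCLike.ofReal_re]
  rw [hrot, StrongDual.norm_extendRCLike]
  exact hg _ (by rwa [norm_smul, hc, one_mul])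

theorem exists_seq_norm_eq_one_tendsto_norm_apply [Nontrivial E] [SeminormedAddCommGroup F]
    [NormedSpace 𝕜 F] (T : E →L[𝕜] F) :
    ∃ x : ℕ → E, (∀ n, ‖x n‖ = 1) ∧ Tendsto (fun n ↦ ‖T (x n)‖) atTop (𝓝 ‖T‖) := by
  obtain ⟨v, hv⟩ := exists_ne (0 : E)
  have hsphere : (Metric.sphere (0 : E) 1).Nonempty :=
    ⟨(‖v‖⁻¹ : 𝕜) • v, mem_sphere_zero_iff_norm.2 (norm_smul_inv_norm hv)⟩
  have hbdd : BddAbove ((fun x ↦ ‖T x‖) '' Metric.sphere 0 1) :=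
    ⟨‖T‖, Set.forall_mem_image.2 fun x hx ↦
      T.unit_le_opNorm x (mem_sphere_zero_iff_norm.1 hx).le⟩
  obtain ⟨u, -, hlim, hu⟩ := exists_seq_tendsto_sSup (hsphere.image fun x ↦ ‖T x‖) hbdd
  choose x hx hxu using hu
  refine ⟨x, fun n ↦ mem_sphere_zero_iff_norm.1 (hx n), ?_⟩
  rwa [T.sSup_sphere_eq_norm, ← funext hxu] at hlim

theorem nonreflexive_fails_weak_maximizing_general [CompleteSpace E] [NormedAddCommGroup F]
    [NormedSpace 𝕜 F] [Nontrivial F]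
    (hnonrefl : ¬ Function.Surjective (NormedSpace.inclusionInDoubleDual 𝕜 E)) :
    ¬ (∀ S : E →L[𝕜] F,
      (∃ x : ℕ → E, (∀ n, ‖x n‖ = 1) ∧
        Tendsto (fun n => ‖S (x n)‖) atTop (𝓝 ‖S‖) ∧
        ¬ ∀ f : E →L[𝕜] 𝕜, Tendsto (fun n => f (x n)) atTop (𝓝 0)) →
      ∃ x₀, ‖x₀‖ = 1 ∧ ‖S x₀‖ = ‖S‖) := by
  intro hattain
  obtain ⟨φ, hφ⟩ := exists_forall_norm_apply_lt_norm hnonrefl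
  obtain ⟨y₀, hy₀⟩ := exists_ne (0 : F)
  have hφ_pos : 0 < ‖φ‖ := by simpa using hφ 0 (by simp)
  have : Nontrivial E := by
    obtain ⟨v, hv⟩ := DFunLike.ne_iff.1 (norm_pos_iff.1 hφ_pos)
    exact nontrivial_of_ne v 0 fun h ↦ hv (by simp [h])
  obtain ⟨x, hx, hlim⟩ := exists_seq_norm_eq_one_tendsto_norm_apply φ
  have hnorm (v : E) : ‖φ.smulRight y₀ v‖ = ‖φ v‖ * ‖y₀‖ := norm_smul _ _
  have hlim_smulRight : Tendsto (fun n ↦ ‖φ.smulRight y₀ (x n)‖) atTop (𝓝 ‖φ.smulRight y₀‖) := by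
    simpa only [hnorm, ContinuousLinearMap.norm_smulRight_apply] using hlim.mul_const ‖y₀‖
  have hnot_null : ¬ ∀ f : E →L[𝕜] 𝕜, Tendsto (fun n ↦ f (x n)) atTop (𝓝 0) := fun hnull ↦
    hφ_pos.ne (tendsto_nhds_unique (by simpa using (hnull φ).norm) hlim)
  obtain ⟨x₀, hx₀, hmax⟩ := hattain (φ.smulRight y₀) ⟨x, hx, hlim_smulRight, hnot_null⟩
  rw [hnorm, ContinuousLinearMap.norm_smulRight_apply] at hmax
  exact (hφ x₀ hx₀.le).ne (mul_right_cancel₀ (norm_ne_zero_iff.2 hy₀) hmax)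

end RCLike

/-- if `E` is a non-reflexive Banach space (the canonical embedding into
the bidual is not surjective) and `F ≠ {0}`, then the pair `(E, F)` fails the weak
maximizing property: some bounded operator `E → F` has a non-weakly null maximizing
sequence yet does not attain its norm. -/
theorem nonreflexive_fails_weak_maximizing {𝕜 E F : Type*} [RCLike 𝕜]
    [NormedAddCommGroup E] [NormedSpace 𝕜 E] [CompleteSpace E]
    [NormedAddCommGroup F] [NormedSpace 𝕜 F] [CompleteSpace F] [Nontrivial F]
    (hnonrefl : ¬ Function.Surjective (NormedSpace.inclusionInDoubleDual 𝕜 E)) :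
    ¬ (∀ S : E →L[𝕜] F,
      (∃ x : ℕ → E, (∀ n, ‖x n‖ = 1) ∧
        Tendsto (fun n => ‖S (x n)‖) atTop (𝓝 ‖S‖) ∧
        ¬ ∀ f : E →L[𝕜] 𝕜, Tendsto (fun n => f (x n)) atTop (𝓝 0)) →
      ∃ x₀, ‖x₀‖ = 1 ∧ ‖S x₀‖ = ‖S‖) :=
  nonreflexive_fails_weak_maximizing_general hnonrefl
end
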